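/- Extended convergent formula for harmonic sums: Let x ∈ ℝ with x > 0 and let a ∈ ℕ₀. Then the series ∑_{k=1}^{∞} (−1)^{k+1} (∑_{l=1}^{k} ((−1)^l/(l+a)) S_k^{(1)}(l) B_{l+a}({x})) / ((x+1)(x+2)⋯(x+k)) converges absolutely, and ∑_{k=1}^{⌊x⌋} 1/k = log(x) + γ − ∑_{k=1}^{a} B_k({x})/(k x^k) + (1/x^a) ∑_{k=1}^{∞} (−1)^{k+1} (∑_{l=1}^{k} ((−1)^l/(l+a)) S_k^{(1)}(l) B_{l+a}({x})) / ((x+1)(x+2)⋯(x+k)). -/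

import Mathlib

open Finset in
/-- Unsigned Stirling numbers of the first kind, via the rising-factorial recurrence:
`z(z+1)⋯(z+k−1) = ∑ l, stirling1Unsigned k l * z^l`. -/
def stirling1Unsigned : ℕ → ℕ → ℕ
  | 0, 0 => 1
  | 0, _ + 1 => 0
  | k + 1, 0 => k * stirling1Unsigned k 0
  | k + 1, l + 1 => stirling1Unsigned k l + k * stirling1Unsigned k (l + 1)

/-- The Stirling numbers of the first kind `S_k^{(1)}(l)` of the paper, defined by
`z(z+1)⋯(z+k−1) = (−1)^k ∑_{l=0}^k (−1)^l S_k^{(1)}(l) z^l`, i.e.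
`S_k^{(1)}(l) = (−1)^{k−l}` times the coefficient of `z^l` in the rising factorial. -/
def S1 (k l : ℕ) : ℤ := (-1) ^ (k + l) * stirling1Unsigned k l

/-- The `n`-th Bernoulli polynomial `B_n(x) = ∑_{k=0}^n C(n,k) B_k x^{n−k}`,
with `B_1 = −1/2`. -/
noncomputable def bernPoly (n : ℕ) (x : ℝ) : ℝ :=
  ∑ k ∈ Finset.range (n + 1), (n.choose k : ℝ) * (bernoulli k : ℝ) * x ^ (n - k)

/-- The generalized binomial coefficient `C(w,k) = w(w−1)⋯(w−k+1)/k!`. -/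
noncomputable def cchoose (w : ℂ) (k : ℕ) : ℂ :=
  (∏ i ∈ Finset.range k, (w - i)) / (k.factorial : ℂ)

/-- The rising product `(z+1)(z+2)⋯(z+k)`. -/
noncomputable def risingProd (z : ℂ) (k : ℕ) : ℂ :=
  ∏ i ∈ Finset.range k, (z + i + 1)

/-- The rising product `(x+1)(x+2)⋯(x+k)` over the reals. -/
noncomputable def risingProdR (x : ℝ) (k : ℕ) : ℝ :=
  ∏ i ∈ Finset.range k, (x + i + 1)

/-- The digamma function `ψ(z) = Γ′(z)/Γ(z)`. -/
noncomputable def digamma (z : ℂ) : ℂ := deriv Complex.Gamma z / Complex.Gamma z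

/-!
Let `L` be the inverse of the forward difference on `ℝ[X]` that sends `X ^ n` to
`B_{n+1} / (n + 1)`. By Waring's series `∑ k, (z)_k / (w)_{k+1} = 1 / (w - z)` (with `(z)_k` the
rising factorial), the series of the theorem is, up to sign, the value at `{x}` of the factorial
expansion of `z ^ a / (x - z)` with `L` applied in `z`.

Summation by parts, `Δ (p (X)_{k+1}) = (k + 1) p (X + 1)_k + Δp (X + 1)_{k+1}`, bounds
`L (p (X + 1)_k)` on `[0, 1]` by a multiple of `k!`, by induction on the degree of `p`; this gives
absolute convergence for every `y > 0` and decay as `y → ∞`. Writing `S_p(y)` for the sum of the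
series, the identity `z p(z) / (y - z) = y p(z) / (y - z) - p(z)` becomes
`S_{Xp}(y) = y S_p(y) - L p`, which reduces the theorem to `a = 0`. There, for `t = {x}`,
`S_1(y) - S_1(y + 1) = 1 / (y + 1 - t) - log ((y + 1) / y)`, and summing over `y ∈ x + ℕ` compares
the harmonic numbers with the logarithm.
-/

section ForwardDifference

open Polynomial

variable {R : Type*} [CommRing R]

/-- The forward difference `p(X + 1) - p(X)` of a polynomial. -/
noncomputable def forwardDiff : R[X] →ₗ[R] R[X] := taylor 1 - LinearMap.id

theorem forwardDiff_apply (p : R[X]) : forwardDiff p = p.comp (X + 1) - p := by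
  simp [forwardDiff, taylor_apply]

theorem degree_forwardDiff_lt {p : R[X]} (hp : p ≠ 0) : (forwardDiff p).degree < p.degree :=
  degree_sub_lt_right (degree_taylor p 1) hp (leadingCoeff_taylor 1 p)

theorem forwardDiff_induction {motive : R[X] → Prop} (zero : motive 0)
    (step : ∀ p, motive (forwardDiff p) → motive p) (p : R[X]) : motive p := by
  induction p using (InvImage.wf degree wellFounded_lt).induction with
  | _ p ih =>
    obtain rfl | hp := eq_or_ne p 0
    · exact zero
    · exact step p (ih _ (degree_forwardDiff_lt hp))

theorem forwardDiff_mul_ascPochhammer_succ (p : R[X]) (k : ℕ) :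
    forwardDiff (p * ascPochhammer R (k + 1)) =
      (k + 1 : R) • (p * (ascPochhammer R k).comp (X + 1)) +
        forwardDiff p * (ascPochhammer R (k + 1)).comp (X + 1) := by
  simp only [forwardDiff_apply, mul_comp, ascPochhammer_succ_comp_X_add_one, nsmul_eq_mul,
    smul_eq_C_mul]
  push_cast [map_add, map_natCast, map_one]
  ring

theorem eq_C_eval_zero_of_forwardDiff_eq_zero [IsDomain R] [CharZero R] {p : R[X]}
    (hp : forwardDiff p = 0) : p = C (p.eval 0) := by
  have eval_add_one (x : R) : p.eval (x + 1) = p.eval x := by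
    simpa [forwardDiff_apply, sub_eq_zero] using congr(eval x $hp)
  have eval_natCast (n : ℕ) : p.eval (n : R) = p.eval 0 := by
    induction n with
    | zero => simp
    | succ n ih => rw [Nat.cast_succ, eval_add_one, ih]
  refine eq_of_infinite_eval_eq _ _ <| (Set.infinite_range_of_injective
    (Nat.cast_injective (R := R))).mono ?_
  rintro _ ⟨n, rfl⟩
  simp [eval_natCast]

end ForwardDifference

section IndefiniteSum

open Polynomial

/-- The indefinite sum of a real polynomial: the inverse of `forwardDiff` normalised to have mean
zero on `[0, 1]`, given on the monomials by `X ^ n ↦ B_{n+1}(X) / (n + 1)`. -/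
noncomputable def indefiniteSum : ℝ[X] →ₗ[ℝ] ℝ[X] :=
  (basisMonomials ℝ).constr ℝ fun n =>
    ((n : ℝ) + 1)⁻¹ • (Polynomial.bernoulli (n + 1)).map (algebraMap ℚ ℝ)

theorem indefiniteSum_monomial (n : ℕ) (c : ℝ) :
    indefiniteSum (monomial n c) =
      (c / (n + 1)) • (Polynomial.bernoulli (n + 1)).map (algebraMap ℚ ℝ) := by
  have monomial_one : indefiniteSum (basisMonomials ℝ n) = _ := Module.Basis.constr_basis ..
  rw [coe_basisMonomials] at monomial_one
  rw [← mul_one c, ← smul_eq_mul, ← smul_monomial, map_smul, monomial_one, smul_smul, smul_eq_mul,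
    mul_one, div_eq_mul_inv]

theorem eval_indefiniteSum_monomial (n : ℕ) (c t : ℝ) :
    (indefiniteSum (monomial n c)).eval t = c / (n + 1) * bernoulliFun (n + 1) t := by
  rw [indefiniteSum_monomial, eval_smul, smul_eq_mul, bernoulliFun]

theorem forwardDiff_indefiniteSum (p : ℝ[X]) : forwardDiff (indefiniteSum p) = p := by
  induction p using Polynomial.induction_on' with
  | add p q hp hq => rw [map_add, map_add, hp, hq]
  | monomial n c =>
    have bernoulli_comp := congr(Polynomial.map (algebraMap ℚ ℝ)
      $(Polynomial.bernoulli_comp_one_add_X (n + 1)))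
    have hn : (n : ℝ) + 1 ≠ 0 := by positivity
    rw [indefiniteSum_monomial, map_smul, forwardDiff_apply, add_comm X 1]
    simp only [Polynomial.map_comp, Polynomial.map_add, Polynomial.map_one, map_X, nsmul_eq_mul,
      Polynomial.map_mul, Polynomial.map_natCast, Polynomial.map_pow] at bernoulli_comp
    rw [bernoulli_comp, add_sub_cancel_left, ← C_mul_X_pow_eq_monomial, smul_eq_C_mul, ← mul_assoc,
      ← C_eq_natCast, ← C_mul]
    simp [div_mul_cancel₀ c hn]

theorem integral_indefiniteSum (p : ℝ[X]) : ∫ z in (0 : ℝ)..1, (indefiniteSum p).eval z = 0 := by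
  induction p using Polynomial.induction_on' with
  | add p q hp hq =>
    simp only [map_add, eval_add]
    rw [intervalIntegral.integral_add ((Polynomial.continuous _).intervalIntegrable _ _)
      ((Polynomial.continuous _).intervalIntegrable _ _), hp, hq, add_zero]
  | monomial n c =>
    simp only [eval_indefiniteSum_monomial]
    rw [intervalIntegral.integral_const_mul, integral_bernoulliFun_eq_zero n.succ_ne_zero, mul_zero]

theorem indefiniteSum_forwardDiff (p : ℝ[X]) :
    indefiniteSum (forwardDiff p) = p - C (∫ z in (0 : ℝ)..1, p.eval z) := by
  set r := indefiniteSum (forwardDiff p) - p with hr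
  have r_const : r = C (r.eval 0) := eq_C_eval_zero_of_forwardDiff_eq_zero <| by
    rw [hr, map_sub, forwardDiff_indefiniteSum, sub_self]
  have r_value : r.eval 0 = -∫ z in (0 : ℝ)..1, p.eval z := calc
    r.eval 0 = ∫ z in (0 : ℝ)..1, r.eval z := by rw [r_const]; simp
    _ = -∫ z in (0 : ℝ)..1, p.eval z := by
      simp only [hr, eval_sub]
      rw [intervalIntegral.integral_sub ((Polynomial.continuous _).intervalIntegrable _ _)
        (p.continuous.intervalIntegrable _ _), integral_indefiniteSum, zero_sub]
  rw [r_value, map_neg] at r_const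
  linear_combination r_const

end IndefiniteSum

section RisingFactorial

open Polynomial Filter Topology

theorem ascPochhammer_eval_eq_prod_range {R : Type*} [CommSemiring R] (n : ℕ) (r : R) :
    (ascPochhammer R n).eval r = ∏ i ∈ Finset.range n, (r + i) := by
  induction n with
  | zero => simp
  | succ n ih => rw [ascPochhammer_succ_eval, ih, Finset.prod_range_succ]

theorem ascPochhammer_succ_eval_left {R : Type*} [CommSemiring R] (n : ℕ) (r : R) :
    (ascPochhammer R (n + 1)).eval r = r * (ascPochhammer R n).eval (r + 1) := by
  simp [ascPochhammer_succ_left]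

theorem ascPochhammer_nonneg (n : ℕ) {z : ℝ} (hz : 0 ≤ z) : 0 ≤ (ascPochhammer ℝ n).eval z := by
  rw [ascPochhammer_eval_eq_prod_range]
  positivity

theorem ascPochhammer_eval_le_factorial (n : ℕ) {z : ℝ} (hz : z ∈ Set.Icc 0 1) :
    (ascPochhammer ℝ n).eval z ≤ n.factorial := by
  rw [← ascPochhammer_eval_one ℝ n, ascPochhammer_eval_eq_prod_range,
    ascPochhammer_eval_eq_prod_range]
  have := hz.1
  gcongr
  exact hz.2

theorem one_div_ascPochhammer_sub_one_div_ascPochhammer_add_one (n : ℕ) {w : ℝ} (hw : 0 < w) :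
    1 / (ascPochhammer ℝ n).eval w - 1 / (ascPochhammer ℝ n).eval (w + 1) =
      n / (ascPochhammer ℝ (n + 1)).eval w := by
  have shift := ascPochhammer_succ_eval_left n w
  rw [ascPochhammer_succ_eval] at shift ⊢
  have := ascPochhammer_pos n w hw
  have := ascPochhammer_pos n (w + 1) (by positivity)
  field_simp
  linear_combination -shift

theorem tendsto_ascPochhammer_div_ascPochhammer {z w : ℝ} (hz : 0 ≤ z) (hzw : z < w) :
    Tendsto (fun n : ℕ => (ascPochhammer ℝ n).eval z / (ascPochhammer ℝ n).eval w)
      atTop (𝓝 0) := by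
  rw [← tendsto_add_atTop_iff_nat 1]
  obtain rfl | hz := hz.eq_or_lt
  · simp
  have euler_limit := ((tendsto_rpow_neg_atTop (sub_pos.2 hzw)).comp
    tendsto_natCast_atTop_atTop).mul ((Real.GammaSeq_tendsto_Gamma w).div
      (Real.GammaSeq_tendsto_Gamma z) (Real.Gamma_pos_of_pos hz).ne')
  rw [zero_mul] at euler_limit
  refine euler_limit.congr' ?_
  filter_upwards [eventually_gt_atTop 0] with n hn
  have hn : (0 : ℝ) < n := by exact_mod_cast hn
  simp only [Function.comp_apply, Pi.div_apply, Real.GammaSeq, ← ascPochhammer_eval_eq_prod_range]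
  have := ascPochhammer_pos (n + 1) z hz
  have := ascPochhammer_pos (n + 1) w (hz.trans hzw)
  rw [neg_sub, Real.rpow_sub hn]
  field_simp

theorem hasSum_ascPochhammer_div_ascPochhammer_succ {z w : ℝ} (hz : 0 ≤ z) (hzw : z < w) :
    HasSum (fun k : ℕ => (ascPochhammer ℝ k).eval z / (ascPochhammer ℝ (k + 1)).eval w)
      (1 / (w - z)) := by
  have hw : 0 < w := hz.trans_lt hzw
  have hwz : w - z ≠ 0 := (sub_pos.2 hzw).ne'
  have telescope (k : ℕ) :
      (ascPochhammer ℝ k).eval z / (ascPochhammer ℝ (k + 1)).eval w =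
        ((ascPochhammer ℝ k).eval z / (ascPochhammer ℝ k).eval w -
          (ascPochhammer ℝ (k + 1)).eval z / (ascPochhammer ℝ (k + 1)).eval w) / (w - z) := by
    have := ascPochhammer_pos k w hw
    have : w + k ≠ 0 := by positivity
    simp only [ascPochhammer_succ_eval]
    field_simp
    ring
  rw [hasSum_iff_tendsto_nat_of_nonneg fun k =>
    div_nonneg (ascPochhammer_nonneg k hz) (ascPochhammer_pos (k + 1) w hw).le]
  simp_rw [telescope, ← Finset.sum_div, Finset.sum_range_sub']
  simpa using ((tendsto_ascPochhammer_div_ascPochhammer hz hzw).const_sub 1).div_const (w - z)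

theorem hasSum_factorial_div_ascPochhammer {y : ℝ} (hy : 0 < y) :
    HasSum (fun k : ℕ => (k.factorial : ℝ) / (ascPochhammer ℝ (k + 1)).eval (y + 1)) (1 / y) := by
  simpa using hasSum_ascPochhammer_div_ascPochhammer_succ zero_le_one (lt_add_of_pos_left 1 hy)

theorem tendsto_factorial_div_ascPochhammer {y : ℝ} (hy : 0 < y) :
    Tendsto (fun k : ℕ => (k.factorial : ℝ) / (ascPochhammer ℝ k).eval (y + 1)) atTop (𝓝 0) := by
  simpa using tendsto_ascPochhammer_div_ascPochhammer zero_le_one (lt_add_of_pos_left 1 hy)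

theorem integral_one_div_add_one_sub {y : ℝ} (hy : 0 < y) :
    ∫ z in (0 : ℝ)..1, 1 / (y + 1 - z) = Real.log (y + 1) - Real.log y := by
  simp_rw [one_div]
  rw [intervalIntegral.integral_comp_sub_left (fun u => u⁻¹) (y + 1),
    integral_inv_of_pos (by linarith) (by linarith), Real.log_div (by linarith) (by linarith)]
  simp

theorem hasSum_integral_ascPochhammer_div_ascPochhammer_succ {y : ℝ} (hy : 0 < y) :
    HasSum (fun k : ℕ => (∫ z in (0 : ℝ)..1, (ascPochhammer ℝ k).eval z) /
      (ascPochhammer ℝ (k + 1)).eval (y + 1)) (Real.log (y + 1) - Real.log y) := by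
  simp_rw [← integral_one_div_add_one_sub hy, ← intervalIntegral.integral_div]
  have dominating := hasSum_factorial_div_ascPochhammer hy
  refine intervalIntegral.hasSum_integral_of_dominated_convergence
    (fun k _ => k.factorial / (ascPochhammer ℝ (k + 1)).eval (y + 1))
    (fun k => ((Polynomial.continuous _).div_const _).aestronglyMeasurable)
    (fun k => .of_forall fun z hz => ?_) (.of_forall fun _ _ => dominating.summable)
    intervalIntegrable_const (.of_forall fun z hz => ?_)
  all_goals rw [Set.uIoc_of_le zero_le_one] at hz
  · have denominator_pos := ascPochhammer_pos (k + 1) (y + 1) (by positivity)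
    rw [Real.norm_of_nonneg (div_nonneg (ascPochhammer_nonneg k hz.1.le) denominator_pos.le)]
    gcongr
    exact ascPochhammer_eval_le_factorial k (Set.Ioc_subset_Icc_self hz)
  · exact hasSum_ascPochhammer_div_ascPochhammer_succ hz.1.le (by linarith [hz.2])

end RisingFactorial

section FactorialSeries

open Polynomial Filter Topology

/-- The numerators of the inverse factorial series `factorialSeries`, as polynomials in `t`: the
indefinite sum of `p(X) (X + 1)(X + 2)⋯(X + k)`. For `p = X ^ a` these are the numerators of the
paper, with its index `k` shifted by one. -/
noncomputable def factorialCoeff (p : ℝ[X]) (k : ℕ) : ℝ[X] :=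
  indefiniteSum (p * (ascPochhammer ℝ k).comp (X + 1))

theorem factorialCoeff_zero_right (p : ℝ[X]) : factorialCoeff p 0 = indefiniteSum p := by
  simp [factorialCoeff]

theorem factorialCoeff_X_mul (p : ℝ[X]) (k : ℕ) :
    factorialCoeff (X * p) k = factorialCoeff p (k + 1) - (k + 1 : ℝ) • factorialCoeff p k := by
  simp only [factorialCoeff, ← map_smul, ← map_sub]
  rw [ascPochhammer_succ_comp_X_add_one, ascPochhammer_succ_left]
  simp only [nsmul_eq_mul, smul_eq_C_mul]
  congr 1
  push_cast [map_add, map_natCast, map_one]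
  ring

theorem smul_factorialCoeff_add_factorialCoeff_forwardDiff (p : ℝ[X]) (k : ℕ) :
    (k + 1 : ℝ) • factorialCoeff p k + factorialCoeff (forwardDiff p) (k + 1) =
      p * ascPochhammer ℝ (k + 1) -
        C (∫ z in (0 : ℝ)..1, (p * ascPochhammer ℝ (k + 1)).eval z) := by
  rw [← indefiniteSum_forwardDiff, forwardDiff_mul_ascPochhammer_succ, map_add, map_smul]
  rfl

theorem eval_factorialCoeff_one (k : ℕ) (t : ℝ) :
    (k + 1) * (factorialCoeff 1 k).eval t =
      (ascPochhammer ℝ (k + 1)).eval t - ∫ z in (0 : ℝ)..1, (ascPochhammer ℝ (k + 1)).eval z := by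
  have sum_by_parts := smul_factorialCoeff_add_factorialCoeff_forwardDiff 1 k
  have forwardDiff_one : forwardDiff (1 : ℝ[X]) = 0 := by simp [forwardDiff_apply]
  simpa [forwardDiff_one, factorialCoeff] using congr(eval t $sum_by_parts)

theorem abs_integral_zero_one_le {f : ℝ → ℝ} {M : ℝ} (hf : ∀ z ∈ Set.Icc (0 : ℝ) 1, |f z| ≤ M) :
    |∫ z in (0 : ℝ)..1, f z| ≤ M := by
  have norm_le (z : ℝ) (hz : z ∈ Set.uIoc (0 : ℝ) 1) : ‖f z‖ ≤ M :=
    hf z (Set.Ioc_subset_Icc_self (by rwa [Set.uIoc_of_le zero_le_one] at hz))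
  simpa using intervalIntegral.norm_integral_le_of_norm_le_const norm_le

theorem exists_abs_eval_factorialCoeff_le (p : ℝ[X]) :
    ∃ B : ℝ, ∀ k : ℕ, ∀ t ∈ Set.Icc (0 : ℝ) 1,
      |(factorialCoeff p k).eval t| ≤ B * k.factorial := by
  induction p using forwardDiff_induction with
  | zero => exact ⟨0, by simp [factorialCoeff]⟩
  | step p ih =>
    obtain ⟨B, hB⟩ := ih
    obtain ⟨M, hM⟩ := isCompact_Icc.exists_bound_of_continuousOn
      (p.continuous.continuousOn (s := Set.Icc (0 : ℝ) 1))
    refine ⟨2 * M + B, fun k t ht => ?_⟩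
    set q := p * ascPochhammer ℝ (k + 1) with hq
    have q_le (z : ℝ) (hz : z ∈ Set.Icc (0 : ℝ) 1) : |q.eval z| ≤ M * (k + 1).factorial := by
      rw [hq, eval_mul, abs_mul, abs_of_nonneg (ascPochhammer_nonneg (k + 1) hz.1)]
      exact mul_le_mul (hM z hz) (ascPochhammer_eval_le_factorial (k + 1) hz)
        (ascPochhammer_nonneg (k + 1) hz.1) ((norm_nonneg _).trans (hM z hz))
    have sum_by_parts :
        (k + 1) * (factorialCoeff p k).eval t =
          q.eval t - (∫ z in (0 : ℝ)..1, q.eval z) -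
            (factorialCoeff (forwardDiff p) (k + 1)).eval t := by
      have := congr(eval t $(smul_factorialCoeff_add_factorialCoeff_forwardDiff p k))
      simp only [eval_add, eval_smul, eval_sub, eval_C, smul_eq_mul] at this
      linear_combination this
    have scaled : (k + 1) * |(factorialCoeff p k).eval t| ≤
        (k + 1) * ((2 * M + B) * k.factorial) := calc
      (k + 1) * |(factorialCoeff p k).eval t|
      _ = |q.eval t - (∫ z in (0 : ℝ)..1, q.eval z) -
            (factorialCoeff (forwardDiff p) (k + 1)).eval t| := by
        rw [← sum_by_parts, abs_mul, abs_of_nonneg (by positivity : (0 : ℝ) ≤ k + 1)]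
      _ ≤ M * (k + 1).factorial + M * (k + 1).factorial + B * (k + 1).factorial :=
        (abs_sub _ _).trans <| add_le_add ((abs_sub _ _).trans <|
          add_le_add (q_le t ht) (abs_integral_zero_one_le q_le)) (hB (k + 1) t ht)
      _ = (k + 1) * ((2 * M + B) * k.factorial) := by
        rw [Nat.factorial_succ]
        push_cast
        ring
    exact le_of_mul_le_mul_left scaled (by positivity)

/-- The inverse factorial series `∑ k, b_k(t) / ((y + 1)(y + 2)⋯(y + k + 1))` with numerators
`b_k = factorialCoeff p k`. Formally it is the indefinite sum of `p(z) / (y - z)` at `z = t`. -/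
noncomputable def factorialSeries (p : ℝ[X]) (t y : ℝ) : ℝ :=
  ∑' k : ℕ, (factorialCoeff p k).eval t / (ascPochhammer ℝ (k + 1)).eval (y + 1)

variable {t y : ℝ}

theorem exists_abs_factorialSeries_term_le (p : ℝ[X]) (ht : t ∈ Set.Icc (0 : ℝ) 1) :
    ∃ B : ℝ, ∀ y : ℝ, 0 < y → ∀ k n : ℕ,
      |(factorialCoeff p k).eval t / (ascPochhammer ℝ n).eval (y + 1)| ≤
        B * (k.factorial / (ascPochhammer ℝ n).eval (y + 1)) := by
  obtain ⟨B, hB⟩ := exists_abs_eval_factorialCoeff_le p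
  refine ⟨B, fun y hy k n => ?_⟩
  have denominator_pos := ascPochhammer_pos n (y + 1) (by positivity)
  rw [abs_div, abs_of_pos denominator_pos, ← mul_div_assoc]
  gcongr
  exact hB k t ht

theorem summable_abs_factorialSeries (p : ℝ[X]) (ht : t ∈ Set.Icc (0 : ℝ) 1) (hy : 0 < y) :
    Summable fun k : ℕ =>
      |(factorialCoeff p k).eval t / (ascPochhammer ℝ (k + 1)).eval (y + 1)| := by
  obtain ⟨B, hB⟩ := exists_abs_factorialSeries_term_le p ht
  exact .of_nonneg_of_le (fun _ => abs_nonneg _) (fun k => hB y hy k (k + 1))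
    ((hasSum_factorial_div_ascPochhammer hy).summable.mul_left B)

theorem hasSum_factorialSeries (p : ℝ[X]) (ht : t ∈ Set.Icc (0 : ℝ) 1) (hy : 0 < y) :
    HasSum (fun k : ℕ => (factorialCoeff p k).eval t / (ascPochhammer ℝ (k + 1)).eval (y + 1))
      (factorialSeries p t y) :=
  (summable_abs_factorialSeries p ht hy).of_abs.hasSum

theorem tendsto_factorialSeries_atTop (p : ℝ[X]) (ht : t ∈ Set.Icc (0 : ℝ) 1) :
    Tendsto (factorialSeries p t) atTop (𝓝 0) := by
  obtain ⟨B, hB⟩ := exists_abs_factorialSeries_term_le p ht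
  refine squeeze_zero_norm' (a := fun y => B * (1 / y)) ?_ ?_
  · filter_upwards [eventually_gt_atTop 0] with y hy
    exact tsum_of_norm_bounded ((hasSum_factorial_div_ascPochhammer hy).mul_left B)
      fun k => hB y hy k (k + 1)
  · simpa using tendsto_inv_atTop_zero.const_mul B

theorem factorialSeries_X_mul (p : ℝ[X]) (ht : t ∈ Set.Icc (0 : ℝ) 1) (hy : 0 < y) :
    factorialSeries (X * p) t y = y * factorialSeries p t y - (indefiniteSum p).eval t := by
  set u : ℕ → ℝ := fun k => (factorialCoeff p k).eval t / (ascPochhammer ℝ k).eval (y + 1) with hu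
  have u_tendsto : Tendsto u atTop (𝓝 0) := by
    obtain ⟨B, hB⟩ := exists_abs_factorialSeries_term_le p ht
    exact squeeze_zero_norm (fun k => hB y hy k k)
      (by simpa using (tendsto_factorial_div_ascPochhammer hy).const_mul B)
  have u_zero : u 0 = (indefiniteSum p).eval t := by simp [hu, factorialCoeff_zero_right]
  have telescope (k : ℕ) :
      (factorialCoeff (X * p) k).eval t / (ascPochhammer ℝ (k + 1)).eval (y + 1) -
        y * ((factorialCoeff p k).eval t / (ascPochhammer ℝ (k + 1)).eval (y + 1)) =
      u (k + 1) - u k := by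
    have := ascPochhammer_pos k (y + 1) (by positivity)
    have : y + 1 + k ≠ 0 := by positivity
    simp only [hu, factorialCoeff_X_mul, eval_sub, eval_smul, smul_eq_mul, ascPochhammer_succ_eval]
    field_simp
    ring
  have partial_sums := ((hasSum_factorialSeries (X * p) ht hy).sub
    ((hasSum_factorialSeries p ht hy).mul_left y)).tendsto_sum_nat
  simp_rw [telescope, Finset.sum_range_sub] at partial_sums
  have := tendsto_nhds_unique partial_sums (u_tendsto.sub_const (u 0))
  rw [u_zero] at this
  linear_combination this

theorem factorialSeries_one_eq_sum_add (ht : t ∈ Set.Icc (0 : ℝ) 1) (hy : 0 < y) (a : ℕ) :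
    factorialSeries 1 t y =
      ∑ k ∈ Finset.Icc 1 a, bernoulliFun k t / (k * y ^ k) +
        1 / y ^ a * factorialSeries (X ^ a) t y := by
  induction a with
  | zero => simp
  | succ a ih =>
    rw [ih, Finset.sum_Icc_succ_top (by lia), pow_succ' X, factorialSeries_X_mul _ ht hy,
      ← monomial_one_right_eq_X_pow, eval_indefiniteSum_monomial]
    push_cast
    field_simp
    ring

theorem factorialSeries_one_sub_factorialSeries_one_add_one (ht : t ∈ Set.Icc (0 : ℝ) 1)
    (hy : 0 < y) :
    factorialSeries 1 t y - factorialSeries 1 t (y + 1) =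
      1 / (y + 1 - t) - (Real.log (y + 1) - Real.log y) := by
  have difference := (hasSum_factorialSeries 1 ht hy).sub
    (hasSum_factorialSeries 1 ht (by positivity : 0 < y + 1))
  have summed := (hasSum_ascPochhammer_div_ascPochhammer_succ ht.1
    (by linarith [ht.2] : t < y + 1)).sub (hasSum_integral_ascPochhammer_div_ascPochhammer_succ hy)
  rw [← hasSum_nat_add_iff' 1] at summed
  refine difference.unique ?_
  convert summed using 1
  · ext k
    have denominators := one_div_ascPochhammer_sub_one_div_ascPochhammer_add_one (k + 1)
      (by positivity : 0 < y + 1)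
    push_cast at denominators
    rw [← sub_div, ← eval_factorialCoeff_one]
    linear_combination (factorialCoeff 1 k).eval t * denominators
  · simp

theorem factorialSeries_one_natCast_add (ht : t ∈ Set.Icc (0 : ℝ) 1) {n : ℕ} (hn : 0 < n + t) :
    factorialSeries 1 t (n + t) =
      Real.log (n + t) + Real.eulerMascheroniConstant - harmonic n := by
  set f : ℕ → ℝ := fun m =>
    harmonic m - Real.log (m + t) + factorialSeries 1 t (m + t) with hf
  have f_const (m : ℕ) : f (m + n) = f n := by
    induction m with
    | zero => rw [zero_add]
    | succ m ih =>
      have step := factorialSeries_one_sub_factorialSeries_one_add_one ht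
        (y := (m + n : ℕ) + t) (by push_cast; linarith [m.cast_nonneg (α := ℝ)])
      rw [← ih, add_right_comm, hf]
      simp only [harmonic_succ]
      push_cast at step ⊢
      rw [show (m : ℝ) + n + t + 1 - t = m + n + 1 by ring, one_div] at step
      rw [show (m : ℝ) + n + 1 + t = m + n + t + 1 by ring]
      linear_combination -step
  have natCast_add_tendsto : Tendsto (fun m : ℕ => (m : ℝ) + t) atTop atTop :=
    tendsto_atTop_add_const_right _ _ tendsto_natCast_atTop_atTop
  have f_tendsto : Tendsto f atTop (𝓝 Real.eulerMascheroniConstant) := by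
    have log_shift := (Real.tendsto_log_comp_add_sub_log t).comp
      (tendsto_natCast_atTop_atTop (R := ℝ))
    simpa [hf] using ((Real.tendsto_harmonic_sub_log.sub log_shift).add
      ((tendsto_factorialSeries_atTop 1 ht).comp natCast_add_tendsto)).congr fun m => by
        simp only [Function.comp_apply]
        ring
  have f_eq : f n = Real.eulerMascheroniConstant :=
    tendsto_nhds_unique (tendsto_const_nhds.congr fun m => (f_const m).symm)
      ((tendsto_add_atTop_iff_nat n).2 f_tendsto)
  linear_combination f_eq

end FactorialSeries

section StirlingBernoulli

open Polynomial

theorem coeff_ascPochhammer (R : Type*) [CommSemiring R] (k l : ℕ) :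
    (ascPochhammer R k).coeff l = stirling1Unsigned k l := by
  induction k generalizing l with
  | zero => cases l <;> simp [stirling1Unsigned, coeff_one]
  | succ k ih =>
    rw [ascPochhammer_succ_right, mul_add, coeff_add, mul_comm _ (k : R[X]), ← C_eq_natCast,
      coeff_C_mul]
    cases l <;> simp [stirling1Unsigned, ih]

theorem ascPochhammer_comp_X_add_one_eq_sum (R : Type*) [CommSemiring R] [NoZeroDivisors R]
    [Nontrivial R] (k : ℕ) :
    (ascPochhammer R k).comp (X + 1) =
      ∑ i ∈ Finset.range (k + 1), monomial i (stirling1Unsigned (k + 1) (i + 1) : R) := by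
  have natDegree_lt : ((ascPochhammer R k).comp (X + 1)).natDegree < k + 1 := by
    rw [← C_1, natDegree_comp, ascPochhammer_natDegree, natDegree_X_add_C, mul_one]
    exact k.lt_succ_self
  rw [as_sum_range' _ _ natDegree_lt]
  refine Finset.sum_congr rfl fun i _ => ?_
  rw [← coeff_X_mul, ← ascPochhammer_succ_left, coeff_ascPochhammer]

theorem bernPoly_eq_bernoulliFun (n : ℕ) (x : ℝ) : bernPoly n x = bernoulliFun n x := by
  simp only [bernPoly, bernoulliFun, Polynomial.bernoulli, Polynomial.map_sum, eval_finsetSum,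
    map_monomial, eval_monomial]
  refine Finset.sum_congr rfl fun i _ => ?_
  rw [eq_ratCast, Rat.cast_mul, Rat.cast_natCast]
  ring

theorem risingProdR_eq_ascPochhammer (x : ℝ) (k : ℕ) :
    risingProdR x k = (ascPochhammer ℝ k).eval (x + 1) := by
  simp only [risingProdR, ascPochhammer_eval_eq_prod_range, add_right_comm]

theorem neg_one_pow_mul_sum_S1_mul_bernPoly (a k : ℕ) (t : ℝ) :
    (-1 : ℝ) ^ (k + 1 + 1) * ∑ l ∈ Finset.Icc 1 (k + 1),
        (-1 : ℝ) ^ l / (l + a) * (S1 (k + 1) l : ℝ) * bernPoly (l + a) t =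
      -(factorialCoeff (X ^ a) k).eval t := by
  rw [factorialCoeff, ascPochhammer_comp_X_add_one_eq_sum, Finset.mul_sum, Finset.mul_sum, map_sum,
    eval_finsetSum, ← Finset.sum_neg_distrib, ← Finset.Ico_add_one_right_eq_Icc,
    Finset.sum_Ico_eq_sum_range, Nat.add_sub_cancel]
  refine Finset.sum_congr rfl fun i _ => ?_
  rw [add_comm 1 i]
  have sign : (-1 : ℝ) ^ (k + 1 + 1) * ((-1) ^ (i + 1) * (-1) ^ (k + 1 + (i + 1))) = -1 := by
    rw [← pow_add, ← pow_add]
    exact Odd.neg_one_pow ⟨k + i + 2, by ring⟩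
  rw [← monomial_one_right_eq_X_pow, monomial_mul_monomial, one_mul, eval_indefiniteSum_monomial,
    bernPoly_eq_bernoulliFun, S1, show i + 1 + a = a + i + 1 by ring]
  push_cast
  rw [show (i : ℝ) + 1 + a = a + i + 1 by ring]
  linear_combination stirling1Unsigned (k + 1) (i + 1) / ((a : ℝ) + i + 1) *
    bernoulliFun (a + i + 1) t * sign

end StirlingBernoulli

open Finset in
/-- Extended convergent formula for harmonic sums (formula (31) of Theorem 5.1). -/
theorem extended_harmonic_formula (x : ℝ) (hx : 0 < x) (a : ℕ) :
    Summable (fun k : ℕ =>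
      |(-1 : ℝ) ^ (k + 1 + 1) *
          (∑ l ∈ Icc 1 (k + 1),
            (-1 : ℝ) ^ l / (l + a) * (S1 (k + 1) l : ℝ) * bernPoly (l + a) (Int.fract x)) /
        risingProdR x (k + 1)|) ∧
    (∑ k ∈ Icc 1 ⌊x⌋₊, (1 : ℝ) / k) =
      Real.log x + Real.eulerMascheroniConstant -
        (∑ k ∈ Icc 1 a, bernPoly k (Int.fract x) / (k * x ^ k)) +
        1 / x ^ a *
          ∑' k : ℕ,
            (-1 : ℝ) ^ (k + 1 + 1) *
                (∑ l ∈ Icc 1 (k + 1),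
                  (-1 : ℝ) ^ l / (l + a) * (S1 (k + 1) l : ℝ) *
                    bernPoly (l + a) (Int.fract x)) /
              risingProdR x (k + 1) := by
  have ht : Int.fract x ∈ Set.Icc (0 : ℝ) 1 := ⟨Int.fract_nonneg x, (Int.fract_lt_one x).le⟩
  have floor_add_fract : (⌊x⌋₊ : ℝ) + Int.fract x = x := by
    rw [natCast_floor_eq_intCast_floor hx.le, Int.floor_add_fract]
  have harmonic_eq : (∑ k ∈ Icc 1 ⌊x⌋₊, (1 : ℝ) / k) = harmonic ⌊x⌋₊ := by
    simp [harmonic_eq_sum_Icc]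
  have series_value := factorialSeries_one_natCast_add ht (n := ⌊x⌋₊) (by rwa [floor_add_fract])
  rw [floor_add_fract, factorialSeries_one_eq_sum_add ht hx a] at series_value
  simp_rw [neg_one_pow_mul_sum_S1_mul_bernPoly, risingProdR_eq_ascPochhammer, neg_div, abs_neg,
    tsum_neg, bernPoly_eq_bernoulliFun, harmonic_eq]
  refine ⟨summable_abs_factorialSeries (Polynomial.X ^ a) ht hx, ?_⟩
  rw [← factorialSeries]
  linear_combination series_value
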